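/- arXiv:0705.0795 — 3 statements merged into one kernel-verified Lean document; each statement's English description precedes it below -/
import Mathlib

section
/- Let H = H_1 ⊗ ⋯ ⊗ H_K be a finite-dimensional complex tensor-product Hilbert space, and let |a⟩ and |b⟩ be nonzero product vectors with h(a,b) ≥ 3 such that |Φ⟩ = |a⟩ + |b⟩ is entangled. Then the Schmidt decomposition of |Φ⟩ into two product vectors is unique: if |c⟩ and |d⟩ are product vectors with |Φ⟩ = |c⟩ + |d⟩, then {|a⟩, |b⟩} = {|c⟩, |d⟩} as sets of vectors. -/
/-!
Group the factors into a tripartition (`i`, `j`, all the rest), where `i`, `j` and a third index `l`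
(lying in the rest) are factors in which `a` and `b` differ. Then `a = a₁a₂a₃`, `b = b₁b₂b₃` with
each pair `aₘ, bₘ` linearly independent (`exists_minor_ne_zero`, `exists_minor_prod_ne_zero`), and
the claim becomes the uniqueness of a rank-two decomposition of a three-party tensor
(`three_factor_unique`, a special case of Kruskal's theorem).

For the latter, contracting the third party with the functionals dual to `a₃, b₃` gives
`a₁a₂ = p c₁c₂ + q e₁e₂` and `b₁b₂ = p' c₁c₂ + q' e₁e₂`. As `a₁a₂ + b₁b₂` has rank two, both
`c₁, e₁` and `c₂, e₂` are independent; as `a₁a₂` and `b₁b₂` have rank one, `pq = 0` and `p'q' = 0`.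
Hence `a₁a₂` and `b₁b₂` are, in some order, multiples of `c₁c₂` and `e₁e₂`, and comparing
coefficients of `c₁c₂` and `e₁e₂` determines the third factors. Rank and linear independence are
expressed throughout by `2 × 2` minors.
-/


open Matrix BigOperators ComplexOrder

/-- A vector on `H = H_1 ⊗ ⋯ ⊗ H_K` (realized as functions on the product of the
index sets of fixed bases of the factors) is a product vector if it factorizes as
`v(x) = ∏ k, a k (x k)`. -/
def IsProductVec {K : ℕ} (d : Fin K → ℕ) (v : (∀ k, Fin (d k)) → ℂ) : Prop :=
  ∃ a : ∀ k, Fin (d k) → ℂ, v = fun x => ∏ k, a k (x k)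

/-- The rank-one operator `|v⟩⟨v|`. -/
def ketBra {ι : Type} (v : ι → ℂ) : Matrix ι ι ℂ :=
  Matrix.vecMulVec v (star v)

/-- An operator is separable if it is a finite sum of rank-one operators `|a⟩⟨a|`
with each `a` a product vector (the zero operator, `n = 0`, counts as separable). -/
def SeparableOp {K : ℕ} (d : Fin K → ℕ)
    (E : Matrix (∀ k, Fin (d k)) (∀ k, Fin (d k)) ℂ) : Prop :=
  ∃ (n : ℕ) (v : Fin n → (∀ k, Fin (d k)) → ℂ),
    (∀ i, IsProductVec d (v i)) ∧ E = ∑ i, ketBra (v i)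

/-- Perfect distinguishability of the states `ρ 1, …, ρ n` by separable operations:
there is a POVM consisting of separable positive semidefinite operators which
identifies the states with certainty. -/
def PerfDistSep {K : ℕ} (d : Fin K → ℕ) {n : ℕ}
    (ρ : Fin n → Matrix (∀ k, Fin (d k)) (∀ k, Fin (d k)) ℂ) : Prop :=
  ∃ M : Fin n → Matrix (∀ k, Fin (d k)) (∀ k, Fin (d k)) ℂ,
    (∀ k, (M k).PosSemidef) ∧ (∀ k, SeparableOp d (M k)) ∧
    (∑ k, M k) = 1 ∧
    ∀ k j, (M k * ρ j).trace = if k = j then 1 else 0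

/-- Two non-proportional vectors, the second one nonzero, have a nonvanishing `2 × 2` minor. -/
lemma exists_minor_ne_zero {X : Type*} (f g : X → ℂ) (hg : ∃ x, g x ≠ 0)
    (h : ¬ ∃ z : ℂ, f = z • g) : ∃ x x', f x * g x' - f x' * g x ≠ 0 := by
  by_contra! hc
  obtain ⟨x₀, hx₀⟩ := hg
  refine h ⟨f x₀ / g x₀, ?_⟩
  ext x
  have := hc x x₀
  simp only [Pi.smul_apply, smul_eq_mul]
  field_simp
  linear_combination this

/-- If two product vectors with nonzero factors differ in the factor `l ∈ S`, then the products of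
their factors over `S` are not proportional. -/
lemma exists_minor_prod_ne_zero {K : ℕ} {d : Fin K → ℕ} (f g : ∀ k, Fin (d k) → ℂ)
    (hf : ∀ k, ∃ x, f k x ≠ 0) (hg : ∀ k, ∃ x, g k x ≠ 0) (S : Finset (Fin K)) (l : Fin K)
    (hl : l ∈ S) (h : ∃ t t', f l t * g l t' - f l t' * g l t ≠ 0) :
    ∃ z z' : ∀ k, Fin (d k),
      (∏ k ∈ S, f k (z k)) * (∏ k ∈ S, g k (z' k))
        - (∏ k ∈ S, f k (z' k)) * (∏ k ∈ S, g k (z k)) ≠ 0 := by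
  by_contra! hc
  choose u hu using hf
  choose v hv using hg
  obtain ⟨t, t', ht⟩ := h
  have hfu : ∏ k ∈ S, f k (u k) ≠ 0 := Finset.prod_ne_zero_iff.2 fun k _ => hu k
  have hgv : ∏ k ∈ S, g k (v k) ≠ 0 := Finset.prod_ne_zero_iff.2 fun k _ => hv k
  -- Proportionality transports the nonvanishing of the `g`-product from `v` to `u`, so that the
  -- contradiction can be found by varying only the coordinate `l` of `u`.
  have hgu : ∏ k ∈ S, g k (u k) ≠ 0 := by
    intro h0
    have := hc u v
    rw [h0, mul_zero, sub_zero] at this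
    exact mul_ne_zero hfu hgv this
  have key : ∀ (w : ∀ k, Fin (d k) → ℂ) (s : Fin (d l)),
      ∏ k ∈ S, w k (Function.update u l s k) = w l s * ∏ k ∈ S.erase l, w k (u k) := by
    intro w s
    rw [← Finset.mul_prod_erase S _ hl, Function.update_self]
    congr 1
    refine Finset.prod_congr rfl fun k hk => ?_
    rw [Function.update_of_ne (Finset.ne_of_mem_erase hk)]
  have h1 := hc (Function.update u l t) (Function.update u l t')
  simp only [key] at h1
  have hA : ∏ k ∈ S.erase l, f k (u k) ≠ 0 := Finset.prod_ne_zero_iff.2 fun k _ => hu k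
  have hB : ∏ k ∈ S.erase l, g k (u k) ≠ 0 :=
    Finset.prod_ne_zero_iff.2 fun k hk =>
      Finset.prod_ne_zero_iff.1 hgu k (Finset.mem_of_mem_erase hk)
  refine mul_ne_zero (mul_ne_zero hA hB) ht ?_
  linear_combination h1

/-- The final comparison of coefficients: once `a₁a₂` and `b₁b₂` are multiples of `c₁c₂` and
`e₁e₂`, respectively, the product vectors agree. -/
lemma three_factor_aux {X Y Z : Type*} (a₁ b₁ c₁ e₁ : X → ℂ) (a₂ b₂ c₂ e₂ : Y → ℂ)
    (a₃ b₃ c₃ e₃ : Z → ℂ) {x x' : X} {y y' : Y}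
    (h₁ : c₁ x * e₁ x' - c₁ x' * e₁ x ≠ 0) (h₂ : c₂ y * e₂ y' - c₂ y' * e₂ y ≠ 0)
    (h : ∀ x y z, a₁ x * a₂ y * a₃ z + b₁ x * b₂ y * b₃ z
      = c₁ x * c₂ y * c₃ z + e₁ x * e₂ y * e₃ z)
    (p q : ℂ) (hp : ∀ x y, a₁ x * a₂ y = p * (c₁ x * c₂ y))
    (hq : ∀ x y, b₁ x * b₂ y = q * (e₁ x * e₂ y)) :
    (∀ x y z, a₁ x * a₂ y * a₃ z = c₁ x * c₂ y * c₃ z) ∧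
      ∀ x y z, b₁ x * b₂ y * b₃ z = e₁ x * e₂ y * e₃ z := by
  have h0 : ∀ x y z, c₁ x * c₂ y * (p * a₃ z - c₃ z) + e₁ x * e₂ y * (q * b₃ z - e₃ z) = 0 := by
    intro x y z
    linear_combination h x y z - a₃ z * hp x y - b₃ z * hq x y
  have hu : ∀ z, p * a₃ z - c₃ z = 0 := by
    intro z
    refine (mul_eq_zero.1 ?_).resolve_left (mul_ne_zero h₁ h₂)
    linear_combination e₁ x' * e₂ y' * h0 x y z - e₁ x * e₂ y' * h0 x' y z
      - e₁ x' * e₂ y * h0 x y' z + e₁ x * e₂ y * h0 x' y' z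
  have hv : ∀ z, q * b₃ z - e₃ z = 0 := by
    intro z
    refine (mul_eq_zero.1 ?_).resolve_left (mul_ne_zero h₁ h₂)
    linear_combination c₁ x' * c₂ y' * h0 x y z - c₁ x * c₂ y' * h0 x' y z
      - c₁ x' * c₂ y * h0 x y' z + c₁ x * c₂ y * h0 x' y' z
  refine ⟨fun x y z => ?_, fun x y z => ?_⟩
  · linear_combination a₃ z * hp x y + c₁ x * c₂ y * hu z
  · linear_combination b₃ z * hq x y + e₁ x * e₂ y * hv z

/-- Uniqueness of the decomposition of a three-party tensor into two product vectors whose factors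
are independent in each party. -/
lemma three_factor_unique {X Y Z : Type*} (a₁ b₁ c₁ e₁ : X → ℂ) (a₂ b₂ c₂ e₂ : Y → ℂ)
    (a₃ b₃ c₃ e₃ : Z → ℂ)
    (h₁ : ∃ x x', a₁ x * b₁ x' - a₁ x' * b₁ x ≠ 0)
    (h₂ : ∃ y y', a₂ y * b₂ y' - a₂ y' * b₂ y ≠ 0)
    (h₃ : ∃ z z', a₃ z * b₃ z' - a₃ z' * b₃ z ≠ 0)
    (h : ∀ x y z, a₁ x * a₂ y * a₃ z + b₁ x * b₂ y * b₃ z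
      = c₁ x * c₂ y * c₃ z + e₁ x * e₂ y * e₃ z) :
    ((∀ x y z, a₁ x * a₂ y * a₃ z = c₁ x * c₂ y * c₃ z) ∧
      ∀ x y z, b₁ x * b₂ y * b₃ z = e₁ x * e₂ y * e₃ z) ∨
    ((∀ x y z, a₁ x * a₂ y * a₃ z = e₁ x * e₂ y * e₃ z) ∧
      ∀ x y z, b₁ x * b₂ y * b₃ z = c₁ x * c₂ y * c₃ z) := by
  obtain ⟨x, x', h₁⟩ := h₁
  obtain ⟨y, y', h₂⟩ := h₂
  obtain ⟨z, z', h₃⟩ := h₃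
  -- The coefficients come from Cramer's rule: they are the values on `c₃`, `e₃` of the functionals
  -- dual to `a₃`, `b₃`, built from the coordinates `z`, `z'`.
  obtain ⟨p, q, hpq⟩ : ∃ p q : ℂ, ∀ x y, a₁ x * a₂ y = p * (c₁ x * c₂ y) + q * (e₁ x * e₂ y) := by
    refine ⟨(c₃ z * b₃ z' - c₃ z' * b₃ z) / (a₃ z * b₃ z' - a₃ z' * b₃ z),
      (e₃ z * b₃ z' - e₃ z' * b₃ z) / (a₃ z * b₃ z' - a₃ z' * b₃ z), fun x y => ?_⟩
    rw [div_mul_eq_mul_div, div_mul_eq_mul_div, ← add_div, eq_div_iff h₃]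
    linear_combination b₃ z' * h x y z - b₃ z * h x y z'
  obtain ⟨p', q', hpq'⟩ :
      ∃ p q : ℂ, ∀ x y, b₁ x * b₂ y = p * (c₁ x * c₂ y) + q * (e₁ x * e₂ y) := by
    refine ⟨(a₃ z * c₃ z' - a₃ z' * c₃ z) / (a₃ z * b₃ z' - a₃ z' * b₃ z),
      (a₃ z * e₃ z' - a₃ z' * e₃ z) / (a₃ z * b₃ z' - a₃ z' * b₃ z), fun x y => ?_⟩
    rw [div_mul_eq_mul_div, div_mul_eq_mul_div, ← add_div, eq_div_iff h₃]
    linear_combination a₃ z * h x y z' - a₃ z' * h x y z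
  -- The minor of `s c₁c₂ + t e₁e₂` in the rows `x, x'` and columns `y, y'` is `st` times the product
  -- of the minors; here this is applied to `a₁a₂ + b₁b₂`.
  have hdet : (p + p') * (q + q') *
      ((c₁ x * e₁ x' - c₁ x' * e₁ x) * (c₂ y * e₂ y' - c₂ y' * e₂ y))
      = (a₁ x * b₁ x' - a₁ x' * b₁ x) * (a₂ y * b₂ y' - a₂ y' * b₂ y) := by
    have s : ∀ x y, a₁ x * a₂ y + b₁ x * b₂ y
        = (p + p') * (c₁ x * c₂ y) + (q + q') * (e₁ x * e₂ y) := fun x y => by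
      linear_combination hpq x y + hpq' x y
    have : (a₁ x * a₂ y + b₁ x * b₂ y) * (a₁ x' * a₂ y' + b₁ x' * b₂ y')
        - (a₁ x * a₂ y' + b₁ x * b₂ y') * (a₁ x' * a₂ y + b₁ x' * b₂ y)
        = (a₁ x * b₁ x' - a₁ x' * b₁ x) * (a₂ y * b₂ y' - a₂ y' * b₂ y) := by ring
    rw [← this, s, s, s, s]
    ring
  have hne : (p + p') * (q + q') *
      ((c₁ x * e₁ x' - c₁ x' * e₁ x) * (c₂ y * e₂ y' - c₂ y' * e₂ y)) ≠ 0 :=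
    hdet ▸ mul_ne_zero h₁ h₂
  have hsum := left_ne_zero_of_mul hne
  have hce := right_ne_zero_of_mul hne
  have hc₁ := left_ne_zero_of_mul hce
  have hc₂ := right_ne_zero_of_mul hce
  -- A rank-one matrix has vanishing minors.
  have rank_one : ∀ (f : X → ℂ) (g : Y → ℂ) (s t : ℂ),
      (∀ x y, f x * g y = s * (c₁ x * c₂ y) + t * (e₁ x * e₂ y)) → s = 0 ∨ t = 0 := by
    intro f g s t hst
    refine mul_eq_zero.1 ((mul_eq_zero.1 ?_).resolve_right hce)
    have : (f x * g y) * (f x' * g y') - (f x * g y') * (f x' * g y) = 0 := by ring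
    rw [hst, hst, hst, hst] at this
    linear_combination this
  rcases rank_one _ _ _ _ hpq with rfl | rfl <;> rcases rank_one _ _ _ _ hpq' with rfl | rfl
  · simp at hsum
  · right
    refine three_factor_aux a₁ b₁ e₁ c₁ a₂ b₂ e₂ c₂ a₃ b₃ e₃ c₃ (x := x') (x' := x) (y := y')
      (y' := y) ?_ ?_ ?_ q p' ?_ ?_
    · exact fun h => hc₁ (by linear_combination h)
    · exact fun h => hc₂ (by linear_combination h)
    · exact fun x y z => by linear_combination h x y z
    · exact fun x y => by linear_combination hpq x y
    · exact fun x y => by linear_combination hpq' x y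
  · left
    refine three_factor_aux a₁ b₁ c₁ e₁ a₂ b₂ c₂ e₂ a₃ b₃ c₃ e₃ hc₁ hc₂ h p q' ?_ ?_
    · exact fun x y => by linear_combination hpq x y
    · exact fun x y => by linear_combination hpq' x y
  · simp at hsum

lemma prod_eq_mul_mul_prod_compl {K : ℕ} {d : Fin K → ℕ} (w : ∀ k, Fin (d k) → ℂ) {i j : Fin K}
    (hij : i ≠ j) (u : ∀ k, Fin (d k)) :
    ∏ k, w k (u k) = w i (u i) * w j (u j) * ∏ k ∈ ({i, j} : Finset (Fin K))ᶜ, w k (u k) := by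
  rw [← Finset.prod_mul_prod_compl {i, j}, Finset.prod_pair hij]

/-- **Lemma 3 (uniqueness of the Schmidt decomposition).**
If `|Φ⟩ = |a⟩ + |b⟩` is entangled, where `|a⟩, |b⟩` are nonzero product vectors
differing in at least `3` tensor factors, then any decomposition of `|Φ⟩` as a sum
of two product vectors coincides (as a set of vectors) with `{|a⟩, |b⟩}`. -/
theorem schmidt_decomposition_unique {K : ℕ} (d : Fin K → ℕ)
    (af bf : ∀ k, Fin (d k) → ℂ)
    (a b : (∀ k, Fin (d k)) → ℂ)
    (ha : a = fun x => ∏ k, af k (x k))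
    (hb : b = fun x => ∏ k, bf k (x k))
    (ha0 : a ≠ 0) (hb0 : b ≠ 0)
    (hdiff : 3 ≤ Nat.card {k : Fin K // ¬ ∃ z : ℂ, af k = z • bf k})
    (hent : ¬ IsProductVec d (a + b)) :
    ∀ c e : (∀ k, Fin (d k)) → ℂ,
      IsProductVec d c → IsProductVec d e → a + b = c + e →
        (c = a ∧ e = b) ∨ (c = b ∧ e = a) := by
  classical
  rintro c e ⟨cf, hc⟩ ⟨ef, he⟩ hsum
  have factor_ne : ∀ w : ∀ k, Fin (d k) → ℂ, (fun x : ∀ k, Fin (d k) => ∏ k, w k (x k)) ≠ 0 →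
      ∀ k, ∃ x, w k x ≠ 0 := by
    intro w hw k
    obtain ⟨u, hu⟩ := Function.ne_iff.1 hw
    exact ⟨u k, Finset.prod_ne_zero_iff.1 hu k (Finset.mem_univ k)⟩
  have haf := factor_ne af (ha ▸ ha0)
  have hbf := factor_ne bf (hb ▸ hb0)
  rw [Nat.card_eq_fintype_card] at hdiff
  obtain ⟨⟨i, hi⟩, ⟨j, hj⟩, ⟨l, hl⟩, hij, hil, hjl⟩ := Fintype.two_lt_card_iff.1 hdiff
  simp only [ne_eq, Subtype.mk.injEq] at hij hil hjl
  -- The third party is the product over the complement of `{i, j}`, regarded as a function on the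
  -- whole index set that ignores the coordinates `i` and `j`.
  have hupd : ∀ (w : ∀ k, Fin (d k) → ℂ) (x : Fin (d i)) (y : Fin (d j)) (z : ∀ k, Fin (d k)),
      ∏ k, w k (Function.update (Function.update z i x) j y k)
        = w i x * w j y * ∏ k ∈ ({i, j} : Finset (Fin K))ᶜ, w k (z k) := by
    intro w x y z
    rw [prod_eq_mul_mul_prod_compl w hij, Function.update_self, Function.update_of_ne hij,
      Function.update_self]
    congr 1
    refine Finset.prod_congr rfl fun k hk => ?_
    simp only [Finset.mem_compl, Finset.mem_insert, Finset.mem_singleton, not_or] at hk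
    rw [Function.update_of_ne hk.2, Function.update_of_ne hk.1]
  have key := three_factor_unique (af i) (bf i) (cf i) (ef i) (af j) (bf j) (cf j) (ef j)
    (fun z : ∀ k, Fin (d k) => ∏ k ∈ ({i, j} : Finset (Fin K))ᶜ, af k (z k))
    (fun z => ∏ k ∈ ({i, j} : Finset (Fin K))ᶜ, bf k (z k))
    (fun z => ∏ k ∈ ({i, j} : Finset (Fin K))ᶜ, cf k (z k))
    (fun z => ∏ k ∈ ({i, j} : Finset (Fin K))ᶜ, ef k (z k))
    (exists_minor_ne_zero _ _ (hbf i) hi) (exists_minor_ne_zero _ _ (hbf j) hj)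
    (exists_minor_prod_ne_zero af bf haf hbf _ l
      (by simp [Ne.symm hil, Ne.symm hjl]) (exists_minor_ne_zero _ _ (hbf l) hl))
    (by
      intro x y z
      have := congrFun hsum (Function.update (Function.update z i x) j y)
      simpa only [ha, hb, hc, he, Pi.add_apply, hupd] using this)
  have glue : ∀ v w : ∀ k, Fin (d k) → ℂ,
      (∀ (x : Fin (d i)) (y : Fin (d j)) (z : ∀ k, Fin (d k)),
        v i x * v j y * ∏ k ∈ ({i, j} : Finset (Fin K))ᶜ, v k (z k)
          = w i x * w j y * ∏ k ∈ ({i, j} : Finset (Fin K))ᶜ, w k (z k)) →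
      (fun u : ∀ k, Fin (d k) => ∏ k, w k (u k)) = fun u => ∏ k, v k (u k) := by
    intro v w h
    funext u
    rw [prod_eq_mul_mul_prod_compl w hij, prod_eq_mul_mul_prod_compl v hij, h]
  rw [ha, hb, hc, he]
  rcases key with ⟨h1, h2⟩ | ⟨h1, h2⟩
  · exact Or.inl ⟨glue _ _ h1, glue _ _ h2⟩
  · exact Or.inr ⟨glue _ _ h2, glue _ _ h1⟩
end

section
/- Let ρ_1, …, ρ_n be density operators on H = H_1 ⊗ ⋯ ⊗ H_K with pairwise orthogonal supports, let P_k be the orthogonal projection onto the support of ρ_k, and let P_0 = I − (P_1 + ⋯ + P_n). Then {ρ_1, …, ρ_n} is perfectly distinguishable by separable operations if and only if there exist positive semidefinite operators E_1, …, E_n on H such that E_1 + ⋯ + E_n = P_0 and P_k + E_k is separable for each 1 ≤ k ≤ n. -/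
/-!
The trace of a product of two positive semidefinite matrices is nonnegative, and it vanishes only
if the product does (`trace_mul_nonneg`, `mul_eq_zero_of_trace_mul_eq_zero`).

If a POVM `M` identifies the states, then `tr (M k * ρ j) = 0` forces `M k * ρ j = 0`, hence
`M k * P j = 0`, for `k ≠ j`. Multiplying `∑ k, M k = 1` by `P j` leaves `M j * P j = P j`, so that
`M j - P j = (1 - P j)ᴴ * M j * (1 - P j)` is positive semidefinite; these differences are the
required `E j`.

Conversely, put `M k = P k + E k`. As `∑ k, E k` annihilates every `ρ j`, the nonnegative numbers
`tr (E k * ρ j)` sum to `0` over `k` and therefore vanish, and `P k * ρ j` is `ρ j` or `0`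
according to whether `k = j`.
-/

open Matrix BigOperators ComplexOrder

section Helpers

variable {ι : Type*} [Fintype ι]

lemma exists_eq_mul_of_range_le [DecidableEq ι] {A B : Matrix ι ι ℂ}
    (h : LinearMap.range B.mulVecLin ≤ LinearMap.range A.mulVecLin) :
    ∃ X : Matrix ι ι ℂ, B = A * X := by
  have h1 : ∀ j, ∃ x : ι → ℂ, A *ᵥ x = B.col j := fun j => by
    obtain ⟨x, hx⟩ := h ⟨Pi.single j 1, rfl⟩
    exact ⟨x, by simpa using hx⟩
  choose x hx using h1
  refine ⟨fun i j => x j i, ?_⟩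
  ext i j
  exact (congrFun (hx j) i).symm

open scoped MatrixOrder in
lemma exists_eq_conjTranspose_mul_self [DecidableEq ι] {A : Matrix ι ι ℂ} (hA : A.PosSemidef) :
    ∃ C : Matrix ι ι ℂ, A = Cᴴ * C :=
  CStarAlgebra.nonneg_iff_eq_star_mul_self.mp hA.nonneg

/-- By cyclicity of the trace, `tr (A * B)` for `A = Cᴴ * C` and `B = Dᴴ * D` is the squared
Frobenius norm of `C * Dᴴ`. -/
lemma trace_gram_mul_gram (C D : Matrix ι ι ℂ) :
    (Cᴴ * C * (Dᴴ * D)).trace = ((C * Dᴴ)ᴴ * (C * Dᴴ)).trace := by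
  rw [← Matrix.mul_assoc, Matrix.trace_mul_comm]
  simp [Matrix.conjTranspose_mul, Matrix.mul_assoc]

lemma trace_mul_nonneg [DecidableEq ι] {A B : Matrix ι ι ℂ} (hA : A.PosSemidef) (hB : B.PosSemidef) :
    0 ≤ (A * B).trace := by
  obtain ⟨C, rfl⟩ := exists_eq_conjTranspose_mul_self hA
  obtain ⟨D, rfl⟩ := exists_eq_conjTranspose_mul_self hB
  rw [trace_gram_mul_gram]
  exact (Matrix.posSemidef_conjTranspose_mul_self _).trace_nonneg

lemma mul_eq_zero_of_trace_mul_eq_zero [DecidableEq ι] {A B : Matrix ι ι ℂ}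
    (hA : A.PosSemidef) (hB : B.PosSemidef) (h : (A * B).trace = 0) : A * B = 0 := by
  obtain ⟨C, rfl⟩ := exists_eq_conjTranspose_mul_self hA
  obtain ⟨D, rfl⟩ := exists_eq_conjTranspose_mul_self hB
  rw [trace_gram_mul_gram, Matrix.trace_conjTranspose_mul_self_eq_zero_iff] at h
  rw [Matrix.mul_assoc, ← Matrix.mul_assoc C, h, Matrix.zero_mul, Matrix.mul_zero]

lemma posSemidef_of_isHermitian_of_mul_self {P : Matrix ι ι ℂ} (h : P.IsHermitian)
    (hP : P * P = P) : P.PosSemidef := by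
  have := Matrix.posSemidef_conjTranspose_mul_self P
  rwa [h.eq, hP] at this

/-- If `M` acts as the identity on the range of the projection `P`, then `M - P` is the compression
of `M` to the orthogonal complement of that range. -/
lemma posSemidef_sub_of_mul_eq [DecidableEq ι] {M P : Matrix ι ι ℂ} (hM : M.PosSemidef) (h : P.IsHermitian)
    (hP : P * P = P) (hMP : M * P = P) : (M - P).PosSemidef := by
  have hPM : P * M = P := by
    simpa [h.eq, hM.isHermitian.eq] using congrArg Matrix.conjTranspose hMP
  have key : M - P = (1 - P)ᴴ * M * (1 - P) := by
    simp [Matrix.sub_mul, Matrix.mul_sub, h.eq, hPM, hMP, hP]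
  rw [key]
  exact hM.conjTranspose_mul_mul_same _

end Helpers

/-- **Theorem 1.** Let `ρ 1, …, ρ n` be density operators on `H = H_1 ⊗ ⋯ ⊗ H_K`
with pairwise orthogonal supports, `P k` the orthogonal projection onto the support
of `ρ k`, and `P₀ = I − ∑ k, P k`.  Then `{ρ k}` is perfectly distinguishable by
separable operations iff there are positive semidefinite operators `E 1, …, E n`
with `∑ k, E k = P₀` and `P k + E k` separable for each `k`. -/
theorem perfDistSep_iff_exists_separable_completion {K : ℕ} (d : Fin K → ℕ) {n : ℕ}
    (ρ P : Fin n → Matrix (∀ k, Fin (d k)) (∀ k, Fin (d k)) ℂ)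
    (hρ : ∀ k, (ρ k).PosSemidef) (hρtr : ∀ k, (ρ k).trace = 1)
    (horth : ∀ k j, k ≠ j → ρ k * ρ j = 0)
    (hPherm : ∀ k, (P k).IsHermitian) (hPproj : ∀ k, P k * P k = P k)
    (hPrange : ∀ k, LinearMap.range (P k).mulVecLin
      = LinearMap.range (ρ k).mulVecLin) :
    PerfDistSep d ρ ↔
      ∃ E : Fin n → Matrix (∀ k, Fin (d k)) (∀ k, Fin (d k)) ℂ,
        (∀ k, (E k).PosSemidef) ∧
        (∑ k, E k) = 1 - ∑ k, P k ∧
        ∀ k, SeparableOp d (P k + E k) := by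
  have hX : ∀ k, ∃ X, P k = ρ k * X := fun k => exists_eq_mul_of_range_le (hPrange k).le
  constructor
  · rintro ⟨M, hM, hsep, hsum, htr⟩
    have hMP0 : ∀ k j, k ≠ j → M k * P j = 0 := fun k j hkj => by
      obtain ⟨X, hX⟩ := hX j
      have h0 := mul_eq_zero_of_trace_mul_eq_zero (hM k) (hρ j) (by rw [htr, if_neg hkj])
      rw [hX, ← Matrix.mul_assoc, h0, Matrix.zero_mul]
    have hMP : ∀ j, M j * P j = P j := fun j => by
      have h1 : (∑ k, M k) * P j = P j := by rw [hsum, Matrix.one_mul]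
      rwa [Matrix.sum_mul, Finset.sum_eq_single j (fun k _ hk => hMP0 k j hk) (by simp)] at h1
    exact ⟨fun k => M k - P k,
      fun k => posSemidef_sub_of_mul_eq (hM k) (hPherm k) (hPproj k) (hMP k),
      by rw [Finset.sum_sub_distrib, hsum], fun k => by simpa using hsep k⟩
  · rintro ⟨E, hE, hsum, hsep⟩
    have hPρ : ∀ j, P j * ρ j = ρ j := fun j => by
      obtain ⟨Y, hY⟩ := exists_eq_mul_of_range_le (hPrange j).ge
      rw [hY, ← Matrix.mul_assoc, hPproj]
    have hPρ0 : ∀ k j, k ≠ j → P k * ρ j = 0 := fun k j hkj => by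
      obtain ⟨X, hX⟩ := hX k
      rw [← (hPherm k).eq, hX, Matrix.conjTranspose_mul, (hρ k).isHermitian.eq,
        Matrix.mul_assoc, horth k j hkj, Matrix.mul_zero]
    have hsumPρ : ∀ j, (∑ k, P k) * ρ j = ρ j := fun j => by
      rw [Matrix.sum_mul, Finset.sum_eq_single j (fun k _ hk => hPρ0 k j hk) (by simp), hPρ]
    have hEρ : ∀ k j, (E k * ρ j).trace = 0 := fun k j => by
      have h0 : ∑ k, (E k * ρ j).trace = 0 := by
        rw [← Matrix.trace_sum, ← Matrix.sum_mul, hsum, Matrix.sub_mul, hsumPρ, Matrix.one_mul,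
          sub_self, Matrix.trace_zero]
      exact (Finset.sum_eq_zero_iff_of_nonneg
        fun k _ => trace_mul_nonneg (hE k) (hρ j)).1 h0 k (Finset.mem_univ k)
    refine ⟨fun k => P k + E k,
      fun k => (posSemidef_of_isHermitian_of_mul_self (hPherm k) (hPproj k)).add (hE k),
      hsep, by rw [Finset.sum_add_distrib, hsum, add_sub_cancel], fun k j => ?_⟩
    rw [Matrix.add_mul, Matrix.trace_add, hEρ, add_zero]
    split_ifs with h
    · rw [h, hPρ, hρtr]
    · rw [hPρ0 k j h, Matrix.trace_zero]
end

section
/- Let |Φ_1⟩ = (|00⟩ + |11⟩ + |22⟩)/√3 and |Φ_2⟩ = |01⟩ in ℂ³ ⊗ ℂ³, and let S = span{|Φ_1⟩, |Φ_2⟩}. Then no three product vectors in ℂ³ ⊗ ℂ³ have a linear span containing S; consequently every positive semidefinite operator ρ with support equal to S satisfies Sch(ρ) ≥ 4. -/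
/-!
A vector of `ℂ³ ⊗ ℂ³` is a combination `∑ k, c k • (a k ⊗ b k)` of three fixed product vectors
exactly when its coefficient matrix is `A * diagonal c * B`, where `A` has the columns `a k` and
`B` has the rows `b k`. If the span of these product vectors contains `Φ₁` and `Φ₂`, then
`A * diagonal c * B = s • 1` with `s = 1/√3 ≠ 0`, and `A * diagonal d * B = E₀₁`. The first
identity makes all three factors invertible, with `B * A` a multiple of `(diagonal c)⁻¹`, so
`E₀₁` is similar to a diagonal matrix. As `E₀₁` is nilpotent, that diagonal matrix vanishes,
which forces `E₀₁ = 0`: a contradiction.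

For the Schmidt number, fewer than three product vectors can be padded with zeros, and the set
whose infimum is taken is nonempty because the nine standard basis vectors are product vectors.
-/

open Matrix ComplexOrder

/-- A vector in `ℂ³ ⊗ ℂ³` (realized as functions on `Fin 3 × Fin 3`) is a
product vector if it factorizes. -/
def IsProdVec33 (v : Fin 3 × Fin 3 → ℂ) : Prop :=
  ∃ a b : Fin 3 → ℂ, v = fun p => a p.1 * b p.2

/-- The `3 × 3` coefficient matrix of a vector in `ℂ³ ⊗ ℂ³`; the Schmidt rank of
the vector is the rank of this matrix. -/
def coeffMat (v : Fin 3 × Fin 3 → ℂ) : Matrix (Fin 3) (Fin 3) ℂ :=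
  Matrix.of fun i j => v (i, j)

/-- `|Φ₁⟩ = (|00⟩ + |11⟩ + |22⟩)/√3`. -/
noncomputable def Phi1 : Fin 3 × Fin 3 → ℂ := fun p =>
  if p.1 = p.2 then ((1 / Real.sqrt 3 : ℝ) : ℂ) else 0

/-- `|Φ₂⟩ = |01⟩`. -/
def Phi2 : Fin 3 × Fin 3 → ℂ := fun p => if p = (0, 1) then 1 else 0

/-- The Schmidt number of a nonzero positive semidefinite operator on `ℂ³ ⊗ ℂ³`:
the minimal number of product vectors whose linear span contains its support. -/
noncomputable def SchmidtNumber33 (ρ : Matrix (Fin 3 × Fin 3) (Fin 3 × Fin 3) ℂ) : ℕ :=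
  sInf {n : ℕ | ∃ v : Fin n → Fin 3 × Fin 3 → ℂ,
    (∀ i, IsProdVec33 (v i)) ∧
    LinearMap.range ρ.mulVecLin ≤ Submodule.span ℂ (Set.range v)}

/-- If `A C B` is a nonzero scalar matrix, with `C` and `D` diagonal, then `A D B` is
diagonalizable; hence it can only square to zero by being zero. -/
lemma mul_diagonal_mul_eq_zero_of_sq_eq_zero {n : Type*} [Fintype n] [DecidableEq n]
    (A B : Matrix n n ℂ) (c d : n → ℂ) {s : ℂ} (hs : s ≠ 0)
    (h1 : A * diagonal c * B = s • 1)
    (h2 : (A * diagonal d * B) * (A * diagonal d * B) = 0) :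
    A * diagonal d * B = 0 := by
  -- One-sided inverses of square matrices are two-sided, so the factors can be rotated.
  have hrot : ∀ X Y : Matrix n n ℂ, X * Y = s • 1 → Y * X = s • 1 := by
    intro X Y h
    have h' : (s⁻¹ • X) * Y = 1 := by
      rw [smul_mul_assoc, h, smul_smul, inv_mul_cancel₀ hs, one_smul]
    have h'' := mul_eq_one_comm.mp h'
    rw [mul_smul_comm] at h''
    rw [← h'', smul_smul, mul_inv_cancel₀ hs, one_smul]
  have hL : diagonal c * B * A = s • 1 := hrot _ _ (by rw [← h1, mul_assoc])
  have hR : B * A * diagonal c = s • 1 := by rw [mul_assoc]; exact hrot _ _ h1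
  have hcomm : diagonal d * diagonal c = diagonal c * diagonal d := by
    simp only [diagonal_mul_diagonal, mul_comm]
  -- Conjugating `(A D B)² = 0` by the invertible outer factors gives `D (B A) D = 0`, and
  -- `B A` is a multiple of the inverse of `C`, which commutes with `D`.
  have key : (s * s * s) • (diagonal d * diagonal d) = 0 := by
    have hDPD : (s * s) • (diagonal d * (B * A) * diagonal d) = 0 := by
      calc (s * s) • (diagonal d * (B * A) * diagonal d)
          = (s • 1) * (diagonal d * (B * A) * diagonal d) * (s • 1) := by
            simp only [smul_mul_assoc, mul_smul_comm, one_mul, mul_one, smul_smul]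
        _ = (diagonal c * B * A) * (diagonal d * (B * A) * diagonal d)
              * (B * A * diagonal c) := by rw [hL, hR]
        _ = (diagonal c * B) * ((A * diagonal d * B) * (A * diagonal d * B))
              * (A * diagonal c) := by simp only [mul_assoc]
        _ = 0 := by rw [h2, mul_zero, zero_mul]
    calc (s * s * s) • (diagonal d * diagonal d)
        = (s * s) • (diagonal d * (s • 1) * diagonal d) := by
          simp only [smul_mul_assoc, mul_smul_comm, mul_one, smul_smul]
      _ = (s * s) • (diagonal d * (B * A) * diagonal d) * diagonal c := by
          rw [← hR, smul_mul_assoc, mul_assoc _ (diagonal d) (diagonal c), hcomm]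
          simp only [mul_assoc]
      _ = 0 := by rw [hDPD, zero_mul]
  have hd : d = 0 := by
    have := (smul_eq_zero.mp key).resolve_left (by simp [hs])
    rw [diagonal_mul_diagonal] at this
    funext i
    have hi := congrFun (congrFun this i) i
    simpa using hi
  simp [hd]

/-- The coefficient matrix of a combination of product vectors, in factored form. -/
lemma coeffMat_sum_smul {v : Fin 3 → Fin 3 × Fin 3 → ℂ} {a b : Fin 3 → Fin 3 → ℂ}
    (hv : ∀ k, v k = fun p => a k p.1 * b k p.2) (c : Fin 3 → ℂ) :
    coeffMat (∑ k, c k • v k) = (of a)ᵀ * diagonal c * of b := by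
  ext i j
  rw [mul_apply]
  simp only [coeffMat, of_apply, Finset.sum_apply, Pi.smul_apply, smul_eq_mul, hv,
    mul_diagonal, transpose_apply]
  exact Finset.sum_congr rfl fun k _ => by ring

lemma coeffMat_Phi1 : coeffMat Phi1 = ((1 / Real.sqrt 3 : ℝ) : ℂ) • 1 := by
  ext i j
  simp [coeffMat, Phi1, Matrix.one_apply]

lemma coeffMat_Phi2 : coeffMat Phi2 = Matrix.single 0 1 1 := by
  ext i j
  simp [coeffMat, Phi2, Matrix.single_apply, eq_comm]

lemma not_exists_three_prodVec : ¬ ∃ v : Fin 3 → Fin 3 × Fin 3 → ℂ,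
    (∀ i, IsProdVec33 (v i)) ∧
    Submodule.span ℂ ({Phi1, Phi2} : Set (Fin 3 × Fin 3 → ℂ))
      ≤ Submodule.span ℂ (Set.range v) := by
  rintro ⟨v, hv, hle⟩
  choose a b hab using hv
  obtain ⟨c, hc⟩ := (Submodule.mem_span_range_iff_exists_fun ℂ).mp
    (hle (Submodule.subset_span (by simp : Phi1 ∈ ({Phi1, Phi2} : Set _))))
  obtain ⟨d, hd⟩ := (Submodule.mem_span_range_iff_exists_fun ℂ).mp
    (hle (Submodule.subset_span (by simp : Phi2 ∈ ({Phi1, Phi2} : Set _))))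
  have h1 := coeffMat_sum_smul hab c
  have h2 := coeffMat_sum_smul hab d
  rw [hc, coeffMat_Phi1] at h1
  rw [hd, coeffMat_Phi2] at h2
  have h0 := mul_diagonal_mul_eq_zero_of_sq_eq_zero _ _ c d (by simp) h1.symm
    (by rw [← h2]; simp)
  rw [← h2] at h0
  simpa using congrFun (congrFun h0 0) 1

lemma isProdVec33_single (p : Fin 3 × Fin 3) : IsProdVec33 (Pi.single p 1) := by
  refine ⟨Pi.single p.1 1, Pi.single p.2 1, ?_⟩
  funext q
  simp only [Pi.single_apply, Prod.ext_iff, ite_and, ite_mul, one_mul, zero_mul]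

/-- The defining set of the Schmidt number is nonempty, so its infimum is attained and is not
the junk value `sInf ∅ = 0`. -/
lemma schmidtNumber33_set_nonempty (ρ : Matrix (Fin 3 × Fin 3) (Fin 3 × Fin 3) ℂ) :
    {n : ℕ | ∃ v : Fin n → Fin 3 × Fin 3 → ℂ, (∀ i, IsProdVec33 (v i)) ∧
      LinearMap.range ρ.mulVecLin ≤ Submodule.span ℂ (Set.range v)}.Nonempty := by
  refine ⟨3 * 3, fun i => Pi.single (finProdFinEquiv.symm i) 1,
    fun i => isProdVec33_single _, ?_⟩
  have hr : Set.range (fun i : Fin (3 * 3) =>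
      (Pi.single (finProdFinEquiv.symm i) 1 : Fin 3 × Fin 3 → ℂ))
      = Set.range (Pi.basisFun ℂ (Fin 3 × Fin 3)) := by
    rw [← finProdFinEquiv.symm.surjective.range_comp (Pi.basisFun ℂ (Fin 3 × Fin 3))]
    congr 1
    funext i
    simp
  rw [hr, (Pi.basisFun ℂ (Fin 3 × Fin 3)).span_eq]
  exact le_top

/-- No three product vectors in `ℂ³ ⊗ ℂ³` have a linear span containing
`S = span{|Φ₁⟩, |Φ₂⟩}`; consequently every positive semidefinite operator `ρ`
with support equal to `S` has Schmidt number at least `4`. -/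
theorem span_Phi1_Phi2_schmidtNumber_ge_four :
    (¬ ∃ v : Fin 3 → Fin 3 × Fin 3 → ℂ,
        (∀ i, IsProdVec33 (v i)) ∧
        Submodule.span ℂ ({Phi1, Phi2} : Set (Fin 3 × Fin 3 → ℂ))
          ≤ Submodule.span ℂ (Set.range v)) ∧
      (∀ ρ : Matrix (Fin 3 × Fin 3) (Fin 3 × Fin 3) ℂ, ρ.PosSemidef →
        LinearMap.range ρ.mulVecLin
          = Submodule.span ℂ ({Phi1, Phi2} : Set (Fin 3 × Fin 3 → ℂ)) →
        4 ≤ SchmidtNumber33 ρ) := by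
  refine ⟨not_exists_three_prodVec, fun ρ _ hρ => ?_⟩
  obtain ⟨v, hv, hle⟩ : ∃ v : Fin (SchmidtNumber33 ρ) → Fin 3 × Fin 3 → ℂ,
      (∀ i, IsProdVec33 (v i)) ∧
      LinearMap.range ρ.mulVecLin ≤ Submodule.span ℂ (Set.range v) :=
    Nat.sInf_mem (schmidtNumber33_set_nonempty ρ)
  by_contra! hlt
  -- Pad the family with zero vectors to exactly three members.
  refine not_exists_three_prodVec
    ⟨fun i => if h : (i : ℕ) < SchmidtNumber33 ρ then v ⟨i, h⟩ else 0, fun i => ?_, ?_⟩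
  · by_cases h : (i : ℕ) < SchmidtNumber33 ρ
    · simpa only [h, dite_true] using hv ⟨i, h⟩
    · simp only [h, dite_false]
      exact ⟨0, 0, by funext; simp⟩
  · rw [← hρ]
    refine hle.trans (Submodule.span_mono ?_)
    rintro _ ⟨j, rfl⟩
    have hj : (j : ℕ) < SchmidtNumber33 ρ := j.2
    exact ⟨⟨j, by omega⟩, by simp only [hj, dite_true]⟩
end
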